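/- Let x ≥ 3.5 be a half-integer (x = m + 1/2 for some positive integer m) and let T ≥ 1/log(3/2). Then the series over all integers n ≥ 2 with n ≤ x/2 or n ≥ 3x/2 of (x/n)^{1/log x} · (Λ(n)/(n·log n)) · min{1, 1/(T·|log(x/n)|)} is at most (e/(T·log(3/2)))·(log log x + γ/log x). -/

import Mathlib

theorem exp_neg_le_quartic {u : ℝ} (hu : 0 ≤ u) :
    Real.exp (-u) ≤ 1 - u + u ^ 2 / 2 - u ^ 3 / 6 + u ^ 4 / 24 := by
  have h := Real.sum_le_exp_of_nonneg hu 5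
  simp [Finset.sum_range_succ, Nat.factorial] at h
  have h1 : Real.exp (-u) * Real.exp u = 1 := by rw [← Real.exp_add]; simp
  have h2 := Real.exp_pos (-u)
  have h3 := Real.exp_pos u
  have hq : 0 ≤ 1 - u + u ^ 2 / 2 - u ^ 3 / 6 + u ^ 4 / 24 := by
    nlinarith [sq_nonneg (u ^ 2 - 2 * u), sq_nonneg (u - 1), sq_nonneg u]
  by_contra! hc
  have h4 : (1 - u + u ^ 2 / 2 - u ^ 3 / 6 + u ^ 4 / 24) * Real.exp u < 1 := by
    have := mul_lt_mul_of_pos_right hc h3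
    rwa [h1] at this
  have h5 : (1 - u + u ^ 2 / 2 - u ^ 3 / 6 + u ^ 4 / 24) * (1 + u + u ^ 2 / 2 + u ^ 3 / 6 + u ^ 4 / 24)
      ≤ (1 - u + u ^ 2 / 2 - u ^ 3 / 6 + u ^ 4 / 24) * Real.exp u := by
    apply mul_le_mul_of_nonneg_left _ hq
    linarith
  have h6 : (0:ℝ) ≤ u ^ 6 := by positivity
  have h7 : (0:ℝ) ≤ u ^ 8 := by positivity
  nlinarith

theorem rpow_neg_le_quartic {n s : ℝ} (hn : 1 ≤ n) (hs : 0 ≤ s) :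
    n ^ (-s) ≤ 1 - s * Real.log n + (s * Real.log n) ^ 2 / 2 - (s * Real.log n) ^ 3 / 6
      + (s * Real.log n) ^ 4 / 24 := by
  have := exp_neg_le_quartic (u := s * Real.log n) (mul_nonneg hs (Real.log_nonneg hn))
  rwa [show -(s * Real.log n) = Real.log n * (-s) by ring, ← Real.rpow_def_of_pos (by linarith)] at this

theorem pow_bounds {a l u : ℝ} (hl : 0 ≤ l) (h1 : l < a) (h2 : a < u) (k : ℕ) :
    l ^ k ≤ a ^ k ∧ a ^ k ≤ u ^ k :=
  ⟨pow_le_pow_left₀ hl h1.le k, pow_le_pow_left₀ (hl.trans h1.le) h2.le k⟩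

theorem final_ineq {s : ℝ} (hs : 0 < s) (hs1 : s ≤ 0.823) :
    s * Real.log 5 + (5:ℝ) ^ (-s) - s * ((1 - (2:ℝ) ^ (-s)) / 2 + (1 - (3:ℝ) ^ (-s)) / 3
      + (1 - (4:ℝ) ^ (-s)) / 4 + (1 - (5:ℝ) ^ (-s)) / 10) ≤ 1 + s ^ 2 / 8 := by
  have e2 := rpow_neg_le_quartic (n := 2) (by norm_num) hs.le
  have e3 := rpow_neg_le_quartic (n := 3) (by norm_num) hs.le
  have e4 := rpow_neg_le_quartic (n := 4) (by norm_num) hs.le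
  have e5 := rpow_neg_le_quartic (n := 5) (by norm_num) hs.le
  rw [Real.log_four_eq] at e4
  have a2 := pow_bounds (by norm_num) Real.log_two_gt_d9 Real.log_two_lt_d9
  have a3 := pow_bounds (by norm_num) Real.log_three_gt_d9 Real.log_three_lt_d9
  have a5 := pow_bounds (by norm_num) Real.log_five_gt_d9 Real.log_five_lt_d9
  generalize Real.log 2 = a at *
  generalize Real.log 3 = b at *
  generalize Real.log 5 = c at *
  have f2 := mul_le_mul_of_nonneg_left e2 hs.le
  have f3 := mul_le_mul_of_nonneg_left e3 hs.le
  have f4 := mul_le_mul_of_nonneg_left e4 hs.le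
  have f5 := mul_le_mul_of_nonneg_left e5 hs.le
  have c0 : c ^ 2 / 2 - (a / 2 + b / 3 + 2 * a / 4 + c / 10) ≤ 0.07486 := by
    have := a2 1; have := a3 1; have := a5 1; have := a5 2
    norm_num at *
    linarith
  have c1 : - c ^ 3 / 6 + (a ^ 2 / 2 + b ^ 2 / 3 + (2 * a) ^ 2 / 4 + c ^ 2 / 10) / 2 ≤ 0 := by
    have := a2 2; have := a3 2; have := a5 2; have := a5 3
    norm_num at *
    linarith
  have c2 : c ^ 4 / 24 - (a ^ 3 / 2 + b ^ 3 / 3 + (2 * a) ^ 3 / 4 + c ^ 3 / 10) / 6 ≤ -0.002 := by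
    have := a2 3; have := a3 3; have := a5 3; have := a5 4
    norm_num at *
    linarith
  have c3 : (a ^ 4 / 2 + b ^ 4 / 3 + (2 * a) ^ 4 / 4 + c ^ 4 / 10) / 24 ≤ 0.0916 := by
    have := a2 4; have := a3 4; have := a5 4
    norm_num at *
    linarith
  clear a2 a3 a5
  have g0 := mul_le_mul_of_nonneg_left c0 (pow_nonneg hs.le 2)
  have g1 := mul_le_mul_of_nonneg_left c1 (pow_nonneg hs.le 3)
  have g2 := mul_le_mul_of_nonneg_left c2 (pow_nonneg hs.le 4)
  have g3 := mul_le_mul_of_nonneg_left c3 (pow_nonneg hs.le 5)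
  have k : 0.0916 * s ^ 3 - 0.002 * s ^ 2 + 0.07486 ≤ 1 / 8 := by
    have : s ^ 3 ≤ 0.823 * s ^ 2 := by nlinarith [sq_nonneg s]
    nlinarith
  have k2 := mul_le_mul_of_nonneg_left k (pow_nonneg hs.le 2)
  linarith

noncomputable def hh (s t : ℝ) : ℝ := t ^ (-1 : ℝ) - t ^ (-1 - s)
noncomputable def hA (s t : ℝ) : ℝ := Real.log t + t ^ (-s) / s

theorem hA_deriv {s t : ℝ} (hs : 0 < s) (ht : 0 < t) : HasDerivAt (hA s) (hh s t) t := by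
  unfold hA hh
  have h := (Real.hasDerivAt_log ht.ne').add
    ((Real.hasDerivAt_rpow_const (p := -s) (Or.inl ht.ne')).div_const s)
  convert! h using 1
  rw [Real.rpow_neg_one, show -1 - s = -s - 1 by ring]
  field_simp
  ring

theorem hh_deriv {s t : ℝ} (ht : 0 < t) :
    HasDerivAt (hh s) (-(t ^ (-2:ℝ)) + (1 + s) * t ^ (-2 - s)) t := by
  unfold hh
  have h := (Real.hasDerivAt_rpow_const (p := -1) (Or.inl ht.ne')).sub
    (Real.hasDerivAt_rpow_const (p := -1 - s) (Or.inl ht.ne'))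
  convert! h using 1
  rw [show (-1 - s - 1) = -2 - s by ring, show (-1 - 1 : ℝ) = -2 by ring]
  ring

theorem hh_deriv2 {s t : ℝ} (ht : 0 < t) :
    HasDerivAt (fun t : ℝ => -(t ^ (-2:ℝ)) + (1 + s) * t ^ (-2 - s))
      (2 * t ^ (-3:ℝ) - (1 + s) * (2 + s) * t ^ (-3 - s)) t := by
  have h := (Real.hasDerivAt_rpow_const (p := -2) (Or.inl ht.ne')).neg.add
    ((Real.hasDerivAt_rpow_const (p := -2 - s) (Or.inl ht.ne')).const_mul (1 + s))
  convert! h using 1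
  rw [show (-2 - s - 1) = -3 - s by ring, show (-2 - 1 : ℝ) = -3 by ring]
  ring

theorem hh_convex {s : ℝ} (hs : 0 < s) : ConvexOn ℝ (Set.Ici 5) (hh s) := by
  apply convexOn_of_hasDerivWithinAt2_nonneg (convex_Ici 5)
    (f' := fun t : ℝ => -(t ^ (-2:ℝ)) + (1 + s) * t ^ (-2 - s))
    (f'' := fun t : ℝ => 2 * t ^ (-3:ℝ) - (1 + s) * (2 + s) * t ^ (-3 - s))
  · intro t ht
    exact (hh_deriv (by simp at ht; linarith)).continuousAt.continuousWithinAt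
  · intro t ht
    exact (hh_deriv (by simp at ht; linarith)).hasDerivWithinAt
  · intro t ht
    exact (hh_deriv2 (by simp at ht; linarith)).hasDerivWithinAt
  · intro t ht
    simp at ht
    have ht0 : 0 < t := by linarith
    rw [show -3 - s = -3 + -s by ring, Real.rpow_add ht0]
    have h1 : 0 < t ^ (-3:ℝ) := by positivity
    have h2 : (1 + s) * (2 + s) * t ^ (-s) ≤ 2 := by
      rw [Real.rpow_neg ht0.le, ← div_eq_mul_inv, div_le_iff₀ (by positivity)]
      have h3 : (1.5:ℝ) ≤ Real.log t := by
        have := Real.log_le_log (by norm_num) ht.le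
        have := Real.log_five_gt_d9
        norm_num at *
        linarith
      have h4 : 1 + s * 1.5 + (s * 1.5) ^ 2 / 2 ≤ Real.exp (s * 1.5) :=
        Real.quadratic_le_exp_of_nonneg (by positivity)
      have h5 : Real.exp (s * 1.5) ≤ t ^ s := by
        rw [Real.rpow_def_of_pos ht0]
        apply Real.exp_le_exp.2
        nlinarith
      nlinarith
    nlinarith

theorem trap {s t : ℝ} (hs : 0 < s) (ht : 5 ≤ t) :
    hA s (t + 1) - hA s t ≤ (hh s t + hh s (t + 1)) / 2 := by
  have hm : MonotoneOn (fun y => (y - t) * hh s t + (y - t) ^ 2 / 2 * (hh s (t + 1) - hh s t)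
      - hA s y) (Set.Icc t (t + 1)) := by
    have hd : ∀ y, t ≤ y → HasDerivAt (fun y => (y - t) * hh s t
      + (y - t) ^ 2 / 2 * (hh s (t + 1) - hh s t) - hA s y)
      (hh s t + (y - t) * (hh s (t + 1) - hh s t) - hh s y) y := by
      intro y hy
      have h0 : HasDerivAt (fun y => y - t) 1 y := (hasDerivAt_id y).sub_const t
      have := ((h0.mul_const (hh s t)).add (((h0.pow 2).div_const 2).mul_const
        (hh s (t + 1) - hh s t))).sub (hA_deriv hs (by linarith : 0 < y))
      convert! this using 1
      simp
    apply monotoneOn_of_deriv_nonneg (convex_Icc _ _)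
    · intro y hy
      exact (hd y hy.1).continuousAt.continuousWithinAt
    · intro y hy
      rw [interior_Icc] at hy
      exact (hd y hy.1.le).differentiableAt.differentiableWithinAt
    · intro y hy
      rw [interior_Icc] at hy
      rw [(hd y hy.1.le).deriv]
      have := (hh_convex hs).2 (show t ∈ Set.Ici 5 from ht)
        (show t + 1 ∈ Set.Ici 5 by simp; linarith)
        (show 0 ≤ t + 1 - y by linarith [hy.2]) (show 0 ≤ y - t by linarith [hy.1]) (by ring)
      simp only [smul_eq_mul] at this
      rw [show (t + 1 - y) * t + (y - t) * (t + 1) = y by ring] at this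
      linarith
  have := hm (a := t) (b := t + 1) (by simp) (by simp) (by linarith)
  simp at this
  linarith

theorem zeta_le {s : ℝ} (hs : 0 < s) :
    (riemannZeta ((1 + s : ℝ) : ℂ)).re ≤ Real.eulerMascheroniConstant + hA s 5
      - (hh s 1 + hh s 2 + hh s 3 + hh s 4 + hh s 5 / 2) := by
  have hz : (riemannZeta ((1 + s : ℝ) : ℂ)).re = ∑' n : ℕ, 1 / ((n : ℝ) + 1) ^ (1 + s) := by
    rw [zeta_eq_tsum_one_div_nat_add_one_cpow (by simpa using hs)]
    rw [show (∑' n : ℕ, 1 / ((n : ℂ) + 1) ^ ((1 + s : ℝ) : ℂ))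
      = ((∑' n : ℕ, 1 / ((n : ℝ) + 1) ^ (1 + s) : ℝ) : ℂ) from ?_, Complex.ofReal_re]
    rw [Complex.ofReal_tsum]
    congr 1
    ext n
    rw [Complex.ofReal_div, Complex.ofReal_cpow (by positivity)]
    simp
  have hsum : Summable (fun n : ℕ => 1 / ((n : ℝ) + 1) ^ (1 + s)) := by
    have := (summable_nat_add_iff 1).2 (Real.summable_one_div_nat_rpow.2 (by linarith : 1 < 1 + s))
    simpa using this
  have ht := hsum.hasSum.tendsto_sum_nat
  rw [← hz] at ht
  let G : ℕ → ℝ := fun N => ∑ n ∈ Finset.range N, hh s (n + 1) - hh s N / 2 - hA s N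
  have hsplit : ∀ N : ℕ, ∑ n ∈ Finset.range N, hh s (n + 1)
      = (harmonic N : ℝ) - ∑ n ∈ Finset.range N, 1 / ((n : ℝ) + 1) ^ (1 + s) := by
    intro N
    rw [harmonic, Rat.cast_sum, ← Finset.sum_sub_distrib]
    apply Finset.sum_congr rfl
    intro n _
    unfold hh
    rw [Real.rpow_neg_one, show -1 - s = -(1 + s) by ring, Real.rpow_neg (by positivity)]
    push_cast
    simp
  have hlim : Filter.Tendsto G Filter.atTop
      (nhds (Real.eulerMascheroniConstant - (riemannZeta ((1 + s : ℝ) : ℂ)).re)) := by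
    have t0 : ∀ p : ℝ, 0 < p → Filter.Tendsto (fun N : ℕ => (N : ℝ) ^ (-p)) Filter.atTop (nhds 0) :=
      fun p hp => (tendsto_rpow_neg_atTop hp).comp tendsto_natCast_atTop_atTop
    have t1 := t0 1 one_pos
    have t2 := t0 (1 + s) (by linarith)
    have t3 := t0 s hs
    have := ((Real.tendsto_harmonic_sub_log.sub ht).sub ((t1.sub t2).div_const 2)).sub
      (t3.div_const s)
    simp only [sub_zero, zero_div] at this
    refine this.congr fun N => ?_
    simp only [G]
    rw [hsplit]
    unfold hA hh
    rw [show -1 - s = -(1 + s) by ring]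
    ring
  have hmono : Monotone (fun k => G (k + 5)) := by
    apply monotone_nat_of_le_succ
    intro k
    simp only [G]
    rw [show k + 1 + 5 = (k + 5) + 1 by ring, Finset.sum_range_succ _ (k + 5)]
    have := trap (t := ((k + 5 : ℕ) : ℝ)) hs (by push_cast; linarith [(Nat.cast_nonneg k : (0:ℝ) ≤ k)])
    rw [Nat.cast_succ (k + 5)]
    linarith
  have hge := hmono.ge_of_tendsto (hlim.comp (Filter.tendsto_add_atTop_nat 5)) 0
  simp only [G, Finset.sum_range_succ, Finset.sum_range_zero] at hge
  norm_num at hge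
  push_cast
  linarith

theorem log_zeta_le {s : ℝ} (hs : 0 < s) (hs1 : s ≤ 0.823) :
    Real.log (riemannZeta ((1 + s : ℝ) : ℂ)).re
      ≤ Real.log (1 / s) + Real.eulerMascheroniConstant * s := by
  have hz := zeta_le hs
  have hf := final_ineq hs hs1
  have hg := Real.one_half_lt_eulerMascheroniConstant
  set g := Real.eulerMascheroniConstant
  set Z := (riemannZeta ((1 + s : ℝ) : ℂ)).re with hZ
  have key : s * Z ≤ Real.exp (g * s) := by
    have h1 : 1 + g * s + (g * s) ^ 2 / 2 ≤ Real.exp (g * s) :=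
      Real.quadratic_le_exp_of_nonneg (by positivity)
    have h2 : s ^ 2 / 8 ≤ (g * s) ^ 2 / 2 := by
      have : s ^ 2 * (1 / 4) ≤ s ^ 2 * g ^ 2 := by
        apply mul_le_mul_of_nonneg_left _ (by positivity)
        nlinarith
      nlinarith
    have h3 := mul_le_mul_of_nonneg_left hz hs.le
    have e : ∀ t : ℝ, 0 < t → hh s t = (1 - t ^ (-s)) / t := by
      intro t ht
      unfold hh
      rw [sub_eq_add_neg (-1) s, Real.rpow_add ht, Real.rpow_neg_one]
      field_simp
    rw [e 1 (by norm_num), e 2 (by norm_num), e 3 (by norm_num), e 4 (by norm_num),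
      e 5 (by norm_num), Real.one_rpow, hA] at h3
    have h4 : s * ((5:ℝ) ^ (-s) / s) = (5:ℝ) ^ (-s) := by field_simp
    nlinarith
  by_cases hZ0 : 0 < Z
  · have := Real.log_le_log (by positivity) key
    rw [Real.log_exp, Real.log_mul hs.ne' hZ0.ne'] at this
    rw [one_div, Real.log_inv]
    linarith
  · exfalso
    apply hZ0
    rw [hZ, zeta_eq_tsum_one_div_nat_add_one_cpow (by simpa using hs)]
    rw [show (∑' n : ℕ, 1 / ((n : ℂ) + 1) ^ ((1 + s : ℝ) : ℂ))
      = ((∑' n : ℕ, 1 / ((n : ℝ) + 1) ^ (1 + s) : ℝ) : ℂ) from ?_, Complex.ofReal_re]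
    · have := (summable_nat_add_iff 1).2
        (Real.summable_one_div_nat_rpow.2 (by linarith : 1 < 1 + s))
      refine Summable.tsum_pos (by simpa using this) (fun n => by positivity) 0 (by simp)
    · rw [Complex.ofReal_tsum]
      congr 1
      ext n
      rw [Complex.ofReal_div, Complex.ofReal_cpow (by positivity)]
      simp

open ArithmeticFunction in
/-- The estimate (3.2): the part of the Perron error sum with `n ≤ x/2` or
`n ≥ 3x/2` is at most `(e/(T log(3/2))) (log log x + γ/log x)`. -/
theorem perron_error_far_bound (x T : ℝ)
    (hx : ∃ m : ℕ, 0 < m ∧ x = m + 1 / 2) (hx' : 3.5 ≤ x)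
    (hT : 1 / Real.log (3 / 2) ≤ T) :
    (∑' n : ℕ, if 2 ≤ n ∧ ((n : ℝ) ≤ x / 2 ∨ 3 * x / 2 ≤ (n : ℝ)) then
        (x / n) ^ (1 / Real.log x) * (Λ n / (n * Real.log n)) *
          min 1 (1 / (T * |Real.log (x / n)|))
      else 0)
    ≤ Real.exp 1 / (T * Real.log (3 / 2)) *
        (Real.log (Real.log x) + Real.eulerMascheroniConstant / Real.log x) := by
  have hx0 : (0:ℝ) < x := by norm_num at hx'; linarith
  have hL : (1.2163:ℝ) ≤ Real.log x := by
    have h1 : Real.log (27 / 8) ≤ Real.log x :=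
      Real.log_le_log (by norm_num) (by norm_num at *; linarith)
    rw [Real.log_div (by norm_num) (by norm_num), show (27:ℝ) = 3 ^ 3 by norm_num,
      show (8:ℝ) = 2 ^ 3 by norm_num, Real.log_pow, Real.log_pow] at h1
    have := Real.log_three_gt_d9
    have := Real.log_two_lt_d9
    norm_num at *
    linarith
  have hL0 : 0 < Real.log x := by norm_num at hL; linarith
  have hl : 0 < Real.log (3 / 2) := Real.log_pos (by norm_num)
  have hT0 : 0 < T := lt_of_lt_of_le (by positivity) hT
  set s := 1 / Real.log x with hs
  have hs0 : 0 < s := by positivity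
  have hs1 : s ≤ 0.823 := by
    rw [hs, div_le_iff₀ hL0]
    norm_num at *
    linarith
  have hlog := log_zeta_le hs0 hs1
  rw [log_riemannZeta_eq (by linarith : 1 < 1 + s)] at hlog
  have hnn : ∀ n : ℕ, 0 ≤ Λ n / ((n : ℝ) ^ (1 + s) * Real.log n) := fun n =>
    div_nonneg vonMangoldt_nonneg (mul_nonneg (by positivity) (Real.log_natCast_nonneg n))
  have hsum : Summable (fun n : ℕ => Λ n / ((n : ℝ) ^ (1 + s) * Real.log n)) := by
    refine Summable.of_nonneg_of_le hnn (fun n => ?_)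
      (Real.summable_one_div_nat_rpow.2 (by linarith : 1 < 1 + s))
    rw [mul_comm, ← div_div]
    apply div_le_div_of_nonneg_right _ (by positivity)
    exact div_le_one_of_le₀ vonMangoldt_le_log (Real.log_natCast_nonneg n)
  have hC : 0 ≤ Real.exp 1 / (T * Real.log (3 / 2)) := by positivity
  have hrhs : Real.log (Real.log x) + Real.eulerMascheroniConstant / Real.log x
      = Real.log (1 / s) + Real.eulerMascheroniConstant * s := by
    rw [hs, one_div_one_div]
    ring
  rw [hrhs]
  refine le_trans ?_ (mul_le_mul_of_nonneg_left hlog hC)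
  rw [← tsum_mul_left]
  have hle : ∀ n : ℕ, (if 2 ≤ n ∧ ((n : ℝ) ≤ x / 2 ∨ 3 * x / 2 ≤ (n : ℝ)) then
        (x / n) ^ s * (Λ n / (n * Real.log n)) *
          min 1 (1 / (T * |Real.log (x / n)|)) else 0)
      ≤ Real.exp 1 / (T * Real.log (3 / 2)) * (Λ n / ((n : ℝ) ^ (1 + s) * Real.log n)) := by
    intro n
    split_ifs with h
    · obtain ⟨h2, h⟩ := h
      have hn : (0:ℝ) < n := by exact_mod_cast (by omega : 0 < n)
      have habs : Real.log (3 / 2) ≤ |Real.log (x / n)| := by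
        rcases h with h | h
        · refine le_trans (Real.log_le_log (by norm_num) ?_) (le_abs_self _)
          rw [le_div_iff₀ hn]; linarith
        · rw [← abs_neg, ← Real.log_inv]
          refine le_trans (Real.log_le_log (by norm_num) ?_) (le_abs_self _)
          rw [inv_div, le_div_iff₀ hx0]; linarith
      have hmin : min 1 (1 / (T * |Real.log (x / n)|)) ≤ 1 / (T * Real.log (3 / 2)) := by
        refine (min_le_right _ _).trans ?_
        gcongr
      have hxs : (x / n) ^ s = Real.exp 1 / (n : ℝ) ^ s := by
        rw [Real.div_rpow hx0.le hn.le, Real.rpow_def_of_pos hx0, hs, mul_one_div_cancel hL0.ne']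
      have hnl : 0 ≤ Real.log n := Real.log_natCast_nonneg n
      have hΛ : 0 ≤ Λ n := vonMangoldt_nonneg
      calc _ ≤ (x / n) ^ s * (Λ n / (n * Real.log n)) * (1 / (T * Real.log (3 / 2))) := by
            apply mul_le_mul_of_nonneg_left hmin; positivity
        _ = _ := by
            rw [hxs, Real.rpow_add hn, Real.rpow_one]
            simp only [div_eq_mul_inv, mul_inv]
            ring
    · exact mul_nonneg hC (hnn n)
  have hb := hsum.mul_left (Real.exp 1 / (T * Real.log (3 / 2)))
  refine Summable.tsum_le_tsum hle (Summable.of_nonneg_of_le (fun n => ?_) hle hb) hb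
  split_ifs
  · have hnl : 0 ≤ Real.log n := Real.log_natCast_nonneg n
    have hΛ : 0 ≤ Λ n := vonMangoldt_nonneg
    have : 0 ≤ min 1 (1 / (T * |Real.log (x / n)|)) := le_min zero_le_one (by positivity)
    positivity
  · exact le_rfl
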